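/- arXiv:0910.2386 — 2 statements merged into one kernel-verified Lean document; each statement's English description precedes it below -/
import Mathlib

section
/- The Witten index localizes on the ground states: dim V⁺ − dim V⁻ = dim(ker H ∩ V⁺) − dim(ker H ∩ V⁻). Consequently |dim V⁺ − dim V⁻| is a lower bound on the number of zero-energy ground states: |dim V⁺ − dim V⁻| ≤ dim ker H. -/
/-!
Since `Q² = 0`, also `Q†² = 0`, so the Hamiltonian is the square of the self-adjoint operator
`D = Q + Q†`; hence `ker H = ker D`. As `V⁻` is the orthogonal complement of `V⁺`, the adjoint `Q†`
exchanges the two sectors just as `Q` does, and so does `D`. Moreover `ker D = (range D)ᗮ`, so `D`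
is injective on its range: it embeds `D V⁺` into `D V⁻` and vice versa, and the excited states
cancel from the index.
-/

open Module Submodule

section StrongRankCondition

variable {R M : Type*} [Ring R] [StrongRankCondition R] [AddCommGroup M] [Module R M]

theorem finrank_map_le_finrank_map_of_le_comap {f : End R M} (hf : Disjoint f.ker f.range)
    {p q : Submodule R M} [Module.Finite R q] (hpq : p ≤ q.comap f) :
    finrank R (p.map f) ≤ finrank R (q.map f) := by
  have injective_on_map : Function.Injective (f.domRestrict (p.map f)) :=
    LinearMap.injective_domRestrict_iff.mpr (hf.symm.mono_left LinearMap.map_le_range)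
  calc finrank R (p.map f)
      = finrank R (f.domRestrict (p.map f)).range :=
        (LinearMap.finrank_range_of_inj injective_on_map).symm
    _ = finrank R ((p.map f).map f) := by rw [LinearMap.range_domRestrict]
    _ ≤ finrank R (q.map f) := finrank_mono (map_mono (map_le_iff_le_comap.mpr hpq))

theorem abs_finrank_inf_sub_finrank_inf_le (N p q : Submodule R M) [Module.Finite R N] :
    |(finrank R ↥(N ⊓ p) : ℤ) - finrank R ↥(N ⊓ q)| ≤ finrank R N :=
  abs_sub_le_of_nonneg_of_le
    (Nat.cast_nonneg _) (Nat.cast_le.mpr (finrank_mono inf_le_left))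
    (Nat.cast_nonneg _) (Nat.cast_le.mpr (finrank_mono inf_le_left))

end StrongRankCondition

section RankNullity

variable {K V V₂ : Type*} [DivisionRing K] [AddCommGroup V] [Module K V]
  [AddCommGroup V₂] [Module K V₂]

theorem finrank_map_add_finrank_ker_inf (f : V →ₗ[K] V₂) (p : Submodule K V)
    [FiniteDimensional K p] :
    finrank K (p.map f) + finrank K ↥(f.ker ⊓ p) = finrank K p := by
  have rank_nullity := (f.domRestrict p).finrank_range_add_finrank_ker
  rwa [LinearMap.range_domRestrict, LinearMap.ker_domRestrict,
    ← finrank_map_subtype_eq, map_comap_subtype, inf_comm] at rank_nullity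

theorem finrank_sub_finrank_eq_finrank_ker_inf_sub {f : End K V} (hf : Disjoint f.ker f.range)
    {p q : Submodule K V} [FiniteDimensional K p] [FiniteDimensional K q]
    (hpq : p ≤ q.comap f) (hqp : q ≤ p.comap f) :
    (finrank K p : ℤ) - finrank K q = finrank K ↥(f.ker ⊓ p) - finrank K ↥(f.ker ⊓ q) := by
  have rank_eq : finrank K (p.map f) = finrank K (q.map f) :=
    (finrank_map_le_finrank_map_of_le_comap hf hpq).antisymm
      (finrank_map_le_finrank_map_of_le_comap hf hqp)
  have rank_nullity_p := finrank_map_add_finrank_ker_inf f p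
  have rank_nullity_q := finrank_map_add_finrank_ker_inf f q
  omega

end RankNullity

section InnerProductSpace

variable {𝕜 E F : Type*} [RCLike 𝕜] [NormedAddCommGroup E] [InnerProductSpace 𝕜 E]
  [NormedAddCommGroup F] [InnerProductSpace 𝕜 F]

theorem disjoint_ker_range_of_isSymmetric {T : E →ₗ[𝕜] E} (hT : T.IsSymmetric) :
    Disjoint T.ker T.range := by
  rw [← hT.orthogonal_range]
  exact (orthogonal_disjoint T.range).symm

variable [FiniteDimensional 𝕜 E] [FiniteDimensional 𝕜 F]

theorem orthogonal_le_comap_adjoint {A : E →ₗ[𝕜] F} {p : Submodule 𝕜 E} {q : Submodule 𝕜 F}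
    (h : p ≤ q.comap A) : qᗮ ≤ pᗮ.comap A.adjoint := by
  intro y hy
  rw [mem_comap, mem_orthogonal]
  intro x hx
  rw [LinearMap.adjoint_inner_right]
  exact inner_right_of_mem_orthogonal (h hx) hy

/-- The supersymmetric Dirac operator `Q + Q†` of a supercharge `Q`: the self-adjoint square root
of the Hamiltonian `Q Q† + Q† Q` when `Q² = 0`. -/
noncomputable def diracOperator (Q : E →ₗ[𝕜] E) : E →ₗ[𝕜] E :=
  Q + Q.adjoint

namespace diracOperator

theorem isSymmetric (Q : E →ₗ[𝕜] E) : (diracOperator Q).IsSymmetric :=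
  (LinearMap.isSymmetric_iff_isSelfAdjoint _).mpr (IsSelfAdjoint.add_star_self Q)

theorem comp_self {Q : E →ₗ[𝕜] E} (hQ : Q ∘ₗ Q = 0) :
    diracOperator Q ∘ₗ diracOperator Q = Q ∘ₗ Q.adjoint + Q.adjoint ∘ₗ Q := by
  have adjoint_comp_adjoint : Q.adjoint ∘ₗ Q.adjoint = 0 := by
    rw [← LinearMap.adjoint_comp, hQ, map_zero]
  simp only [diracOperator, LinearMap.add_comp, LinearMap.comp_add, hQ, adjoint_comp_adjoint,
    zero_add, add_comm]

theorem ker_eq_ker_hamiltonian {Q : E →ₗ[𝕜] E} (hQ : Q ∘ₗ Q = 0) :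
    (diracOperator Q).ker = (Q ∘ₗ Q.adjoint + Q.adjoint ∘ₗ Q).ker := by
  rw [← LinearMap.ker_adjoint_comp_self, (isSymmetric Q).adjoint_eq, comp_self hQ]

theorem le_comap {Q : E →ₗ[𝕜] E} {p q : Submodule 𝕜 E}
    (hpq : p ≤ q.comap Q) (hqp : qᗮ ≤ pᗮ.comap Q) : p ≤ q.comap (diracOperator Q) := by
  have adjoint_le : p ≤ q.comap Q.adjoint := by
    simpa only [orthogonal_orthogonal] using orthogonal_le_comap_adjoint hqp
  exact fun x hx ↦ q.add_mem (hpq hx) (adjoint_le hx)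

end diracOperator

theorem witten_index_localizes_general (p q : Submodule 𝕜 E) (horth : q = pᗮ) (Q : E →ₗ[𝕜] E)
    (hpq : ∀ x ∈ p, Q x ∈ q) (hqp : ∀ x ∈ q, Q x ∈ p) (hQ : Q ∘ₗ Q = 0) :
    (finrank 𝕜 p : ℤ) - finrank 𝕜 q
      = (finrank 𝕜 ↥((Q ∘ₗ Q.adjoint + Q.adjoint ∘ₗ Q).ker ⊓ p) : ℤ)
        - finrank 𝕜 ↥((Q ∘ₗ Q.adjoint + Q.adjoint ∘ₗ Q).ker ⊓ q) ∧
    |(finrank 𝕜 p : ℤ) - finrank 𝕜 q| ≤ finrank 𝕜 (Q ∘ₗ Q.adjoint + Q.adjoint ∘ₗ Q).ker := by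
  have horth' : qᗮ = p := by rw [horth, orthogonal_orthogonal]
  have dirac_pq : p ≤ q.comap (diracOperator Q) :=
    diracOperator.le_comap hpq (by rwa [← horth, horth'])
  have dirac_qp : q ≤ p.comap (diracOperator Q) :=
    diracOperator.le_comap hqp (by rwa [← horth, horth'])
  have index_eq := finrank_sub_finrank_eq_finrank_ker_inf_sub
    (disjoint_ker_range_of_isSymmetric (diracOperator.isSymmetric Q)) dirac_pq dirac_qp
  rw [diracOperator.ker_eq_ker_hamiltonian hQ] at index_eq
  exact ⟨index_eq, index_eq ▸ abs_finrank_inf_sub_finrank_inf_le _ p q⟩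

end InnerProductSpace

/-- The Witten index localizes on the ground states:
`dim V⁺ − dim V⁻ = dim(ker H ∩ V⁺) − dim(ker H ∩ V⁻)`, and consequently
`|dim V⁺ − dim V⁻| ≤ dim ker H`. -/
theorem witten_index_localizes
    {W : Type*} [NormedAddCommGroup W] [InnerProductSpace ℂ W] [FiniteDimensional ℂ W]
    (Vp Vf : Submodule ℂ W) (horth : Vf = Vpᗮ)
    (Q : W →ₗ[ℂ] W)
    (hQp : ∀ x ∈ Vp, Q x ∈ Vf) (hQf : ∀ x ∈ Vf, Q x ∈ Vp)
    (hQ2 : Q ∘ₗ Q = 0) :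
    (Module.finrank ℂ Vp : ℤ) - Module.finrank ℂ Vf
      = (Module.finrank ℂ
          ↥(LinearMap.ker (Q ∘ₗ LinearMap.adjoint Q + LinearMap.adjoint Q ∘ₗ Q) ⊓ Vp) : ℤ)
        - Module.finrank ℂ
          ↥(LinearMap.ker (Q ∘ₗ LinearMap.adjoint Q + LinearMap.adjoint Q ∘ₗ Q) ⊓ Vf) ∧
    |(Module.finrank ℂ Vp : ℤ) - Module.finrank ℂ Vf|
      ≤ Module.finrank ℂ
          ↥(LinearMap.ker (Q ∘ₗ LinearMap.adjoint Q + LinearMap.adjoint Q ∘ₗ Q)) :=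
  witten_index_localizes_general Vp Vf horth Q hQp hQf hQ2
end

section
/- The Witten index of the supersymmetric hard-core fermion model equals the independence polynomial of the graph evaluated at −1: dim(ker H ∩ bosonic subspace) − dim(ker H ∩ fermionic subspace) = Σ_I (−1)^{|I|}, where the sum runs over all independent sets I of G (including the empty set). -/
/-! ### The supersymmetric hard-core fermion model on a graph

For a finite simple graph `G` with totally ordered vertex set, the Hilbert space has an
orthonormal basis `{|I⟩ : I an independent set of G}`, the supercharge acts by
`Q|I⟩ = Σ_v ε(v,I) |I ∪ {v}⟩` (sum over `v ∉ I` with `I ∪ {v}` independent,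
`ε(v,I) = (−1)^{#{w ∈ I : w < v}}`), and the Hamiltonian is `H = Q Q† + Q† Q`. -/

open scoped BigOperators

/-- A finite set of vertices is independent if it contains no edge of `G`. -/
def Indep {V : Type*} (G : SimpleGraph V) (I : Finset V) : Prop :=
  ∀ ⦃a⦄, a ∈ I → ∀ ⦃b⦄, b ∈ I → ¬ G.Adj a b

lemma Indep.mono {V : Type*} {G : SimpleGraph V} {I J : Finset V}
    (hI : Indep G I) (hJI : J ⊆ I) : Indep G J :=
  fun _ ha _ hb => hI (hJI ha) (hJI hb)

/-- The independent sets of `G`, indexing the orthonormal basis of the Hilbert space. -/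
def IndepSet {V : Type*} (G : SimpleGraph V) : Type _ := {I : Finset V // Indep G I}

noncomputable instance {V : Type*} [Fintype V] [LinearOrder V] (G : SimpleGraph V) :
    Fintype (IndepSet G) := by
  classical exact Subtype.fintype _

instance {V : Type*} [LinearOrder V] (G : SimpleGraph V) : DecidableEq (IndepSet G) := by
  unfold IndepSet; infer_instance

/-- The Hilbert space `ℋ_G` of the hard-core fermion model: one orthonormal basis state
`|I⟩` for every independent set `I` of `G`. -/
noncomputable abbrev FockSpace {V : Type*} [Fintype V] [LinearOrder V] (G : SimpleGraph V) :=
  EuclideanSpace ℂ (IndepSet G)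

/-- The fermionic sign `ε(v, I) = (−1)^{#{w ∈ I : w < v}}`. -/
def fsign {V : Type*} [LinearOrder V] (I : Finset V) (v : V) : ℂ :=
  (-1) ^ (I.filter (· < v)).card

/-- The supercharge `Q`, with `Q|I⟩ = Σ_v ε(v,I) |I ∪ {v}⟩` over vertices `v ∉ I` such that
`I ∪ {v}` is independent; equivalently `(Qψ)(J) = Σ_{v ∈ J} ε(v, J∖{v}) ψ(J∖{v})`. -/
noncomputable def supercharge {V : Type*} [Fintype V] [LinearOrder V] (G : SimpleGraph V) :
    FockSpace G →ₗ[ℂ] FockSpace G where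
  toFun ψ := WithLp.toLp 2 fun J => ∑ v ∈ J.1, fsign (J.1.erase v) v *
      ψ ⟨J.1.erase v, J.2.mono (Finset.erase_subset v J.1)⟩
  map_add' ψ φ := by
    ext J
    simp only [← Finset.sum_add_distrib, PiLp.add_apply]
    exact Finset.sum_congr rfl fun v _ => mul_add (fsign (J.1.erase v) v)
      (ψ ⟨J.1.erase v, J.2.mono (Finset.erase_subset v J.1)⟩)
      (φ ⟨J.1.erase v, J.2.mono (Finset.erase_subset v J.1)⟩)
  map_smul' c ψ := by
    ext J
    simp [Finset.mul_sum]
    exact Finset.sum_congr rfl fun v _ => mul_left_comm (fsign (J.1.erase v) v) c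
      (ψ ⟨J.1.erase v, J.2.mono (Finset.erase_subset v J.1)⟩)

/-- The Hamiltonian `H = Q Q† + Q† Q` of the supersymmetric hard-core fermion model. -/
noncomputable def hamiltonian {V : Type*} [Fintype V] [LinearOrder V] (G : SimpleGraph V) :
    FockSpace G →ₗ[ℂ] FockSpace G :=
  supercharge G ∘ₗ LinearMap.adjoint (supercharge G)
    + LinearMap.adjoint (supercharge G) ∘ₗ supercharge G

/-- The fermion-number operator `F`, with `F|I⟩ = |I| · |I⟩`. -/
noncomputable def numberOp {V : Type*} [Fintype V] [LinearOrder V] (G : SimpleGraph V) :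
    FockSpace G →ₗ[ℂ] FockSpace G where
  toFun ψ := WithLp.toLp 2 fun I => (I.1.card : ℂ) * ψ I
  map_add' ψ φ := by ext I; simp [mul_add]
  map_smul' c ψ := by ext I; simp [mul_left_comm]

/-- The bosonic subspace: the span of the basis states `|I⟩` with `|I|` even. -/
noncomputable def bosonic {V : Type*} [Fintype V] [LinearOrder V] (G : SimpleGraph V) :
    Submodule ℂ (FockSpace G) :=
  Submodule.span ℂ
    {e : FockSpace G | ∃ I : IndepSet G, Even I.1.card ∧ e = EuclideanSpace.single I 1}

/-- The fermionic subspace: the span of the basis states `|I⟩` with `|I|` odd. -/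
noncomputable def fermionic {V : Type*} [Fintype V] [LinearOrder V] (G : SimpleGraph V) :
    Submodule ℂ (FockSpace G) :=
  Submodule.span ℂ
    {e : FockSpace G | ∃ I : IndepSet G, Odd I.1.card ∧ e = EuclideanSpace.single I 1}

/-!
The self-adjoint operator `D = Q + Q†` squares to `H` because `Q² = 0`, so `ker H = ker D`. Both `Q`
and `Q†` change the fermion number by one, so `D` exchanges the bosonic and fermionic subspaces, and
its two restrictions are adjoint to each other. Adjoint maps have equal rank, so by rank–nullity
the index `dim (ker D ∩ bosonic) − dim (ker D ∩ fermionic)` is the difference of the dimensions of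
the two subspaces, which counts the independent sets with sign `(−1)^{|I|}`.
-/

section Combinatorics

lemma sum_sum_erase_eq_zero_of_add_swap_eq_zero {α M : Type*} [DecidableEq α] [AddCommMonoid M]
    (s : Finset α) (f : α → α → M) (hf : ∀ a ∈ s, ∀ b ∈ s, a ≠ b → f a b + f b a = 0) :
    ∑ a ∈ s, ∑ b ∈ s.erase a, f a b = 0 := by
  rw [Finset.sum_sigma']
  refine Finset.sum_involution (fun p _ => ⟨p.2, p.1⟩) ?_ ?_ ?_ ?_
  all_goals grind

lemma sum_neg_one_pow_eq_card_even_sub_card_odd {ι : Type*} (s : Finset ι) (f : ι → ℕ) :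
    ∑ i ∈ s, (-1 : ℤ) ^ f i
      = ((s.filter fun i => Even (f i)).card : ℤ) - (s.filter fun i => Odd (f i)).card := by
  simp only [Finset.natCast_card_filter, ← Finset.sum_sub_distrib]
  refine Finset.sum_congr rfl fun i _ => ?_
  rcases Nat.even_or_odd (f i) with h | h
  · simp [h, h.neg_one_pow, Nat.not_odd_iff_even.2 h]
  · simp [h, h.neg_one_pow, Nat.not_even_iff_odd.2 h]

end Combinatorics

section LinearAlgebra

open Module

variable {R M N : Type*} [Semiring R] [AddCommMonoid M] [Module R M] [AddCommMonoid N] [Module R N]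

lemma finrank_ker_restrict (f : M →ₗ[R] N) {p : Submodule R M} {q : Submodule R N}
    (hf : ∀ x ∈ p, f x ∈ q) :
    finrank R (f.restrict hf).ker = finrank R ↥(f.ker ⊓ p) := by
  rw [LinearMap.ker_restrict, ← Submodule.finrank_map_subtype_eq p,
    Submodule.map_comap_subtype, inf_comm]

lemma finrank_span_image_eq_card [StrongRankCondition R] {ι : Type*} [Fintype ι] {v : ι → M}
    (hv : LinearIndependent R v) (P : ι → Prop) [DecidablePred P] :
    finrank R (Submodule.span R (v '' {i | P i})) = (Finset.univ.filter P).card := by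
  have := nontrivial_of_invariantBasisNumber R
  rw [Set.image_eq_range, ← Fintype.card_subtype]
  exact finrank_span_eq_card (hv.comp _ Subtype.val_injective)

end LinearAlgebra

section InnerProductSpace

open Module

variable {𝕜 E F : Type*} [RCLike 𝕜]
  [NormedAddCommGroup E] [InnerProductSpace 𝕜 E] [NormedAddCommGroup F] [InnerProductSpace 𝕜 F]

section OrthonormalBasis

variable {ι : Type*} [Fintype ι] (b : OrthonormalBasis ι 𝕜 E) (s : Set ι)

lemma mem_span_orthonormalBasis_image_iff {x : E} :
    x ∈ Submodule.span 𝕜 (b '' s) ↔ ∀ i ∉ s, b.repr x i = 0 := by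
  rw [← b.coe_toBasis, Basis.mem_span_image]
  simp only [Set.subset_def, SetLike.mem_coe, Finsupp.mem_support_iff, b.coe_toBasis_repr_apply]
  exact forall_congr' fun i => not_imp_comm

lemma orthogonal_span_orthonormalBasis_image :
    (Submodule.span 𝕜 (b '' s))ᗮ = Submodule.span 𝕜 (b '' sᶜ) := by
  ext x
  rw [mem_span_orthonormalBasis_image_iff, ← Submodule.span_singleton_le_iff_mem,
    ← Submodule.isOrtho_iff_le, Submodule.isOrtho_span]
  simp [b.repr_apply_apply, inner_eq_zero_symm]

end OrthonormalBasis

variable [FiniteDimensional 𝕜 E] [FiniteDimensional 𝕜 F]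

lemma adjoint_mem_orthogonal (f : E →ₗ[𝕜] F) {U : Submodule 𝕜 E} {W : Submodule 𝕜 F}
    (hf : ∀ x ∈ U, f x ∈ W) : ∀ y ∈ Wᗮ, f.adjoint y ∈ Uᗮ := by
  intro y hy x hx
  rw [LinearMap.adjoint_inner_right]
  exact hy _ (hf x hx)

lemma finrank_ker_sub_finrank_ker_adjoint (f : E →ₗ[𝕜] F) :
    (finrank 𝕜 f.ker : ℤ) - finrank 𝕜 f.adjoint.ker = finrank 𝕜 E - finrank 𝕜 F := by
  have rank_nullity := f.finrank_range_add_finrank_ker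
  have rank_nullity_adjoint := f.adjoint.finrank_range_add_finrank_ker
  rw [f.finrank_range_adjoint] at rank_nullity_adjoint
  lia

lemma finrank_ker_inf_sub_of_isSymmetric {D : E →ₗ[𝕜] E} (hD : D.IsSymmetric)
    {U W : Submodule 𝕜 E} (hUW : ∀ x ∈ U, D x ∈ W) (hWU : ∀ x ∈ W, D x ∈ U) :
    (finrank 𝕜 ↥(D.ker ⊓ U) : ℤ) - finrank 𝕜 ↥(D.ker ⊓ W) = finrank 𝕜 U - finrank 𝕜 W := by
  have adjoint_restrict : (D.restrict hUW).adjoint = D.restrict hWU :=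
    Eq.symm <| (LinearMap.eq_adjoint_iff _ _).2 fun x y => by
      simp only [Submodule.coe_inner, LinearMap.coe_restrict_apply, hD x.1 y.1]
  rw [← finrank_ker_restrict D hUW, ← finrank_ker_restrict D hWU, ← adjoint_restrict]
  exact finrank_ker_sub_finrank_ker_adjoint _

lemma isSymmetric_add_adjoint (Q : E →ₗ[𝕜] E) : (Q + Q.adjoint).IsSymmetric :=
  (LinearMap.isSymmetric_iff_isSelfAdjoint _).2 (IsSelfAdjoint.add_star_self Q)

lemma ker_comp_adjoint_add_adjoint_comp {Q : E →ₗ[𝕜] E} (hQ : Q ∘ₗ Q = 0) :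
    (Q ∘ₗ Q.adjoint + Q.adjoint ∘ₗ Q).ker = (Q + Q.adjoint).ker := by
  have adjoint_sq : Q.adjoint ∘ₗ Q.adjoint = 0 := by
    rw [← LinearMap.adjoint_comp, hQ, map_zero]
  have sq_eq : (Q + Q.adjoint).adjoint ∘ₗ (Q + Q.adjoint)
      = Q ∘ₗ Q.adjoint + Q.adjoint ∘ₗ Q := by
    rw [(isSymmetric_add_adjoint Q).adjoint_eq, LinearMap.add_comp, LinearMap.comp_add,
      LinearMap.comp_add, hQ, adjoint_sq, zero_add, add_zero]
  rw [← sq_eq, LinearMap.ker_adjoint_comp_self]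

lemma finrank_ker_inf_sub_finrank_ker_inf_orthogonal {Q : E →ₗ[𝕜] E} (hQ : Q ∘ₗ Q = 0)
    {U : Submodule 𝕜 E} (hU : ∀ x ∈ U, Q x ∈ Uᗮ) (hU' : ∀ x ∈ Uᗮ, Q x ∈ U) :
    (finrank 𝕜 ↥((Q ∘ₗ Q.adjoint + Q.adjoint ∘ₗ Q).ker ⊓ U) : ℤ)
      - finrank 𝕜 ↥((Q ∘ₗ Q.adjoint + Q.adjoint ∘ₗ Q).ker ⊓ Uᗮ)
      = finrank 𝕜 U - finrank 𝕜 Uᗮ := by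
  have adjoint_mem : ∀ x ∈ U, Q.adjoint x ∈ Uᗮ := by
    simpa only [Submodule.orthogonal_orthogonal] using adjoint_mem_orthogonal Q hU
  have adjoint_mem' : ∀ x ∈ Uᗮ, Q.adjoint x ∈ U := by
    simpa only [Submodule.orthogonal_orthogonal] using adjoint_mem_orthogonal Q hU'
  rw [ker_comp_adjoint_add_adjoint_comp hQ]
  exact finrank_ker_inf_sub_of_isSymmetric (isSymmetric_add_adjoint Q)
    (fun x hx => add_mem (hU x hx) (adjoint_mem x hx))
    (fun x hx => add_mem (hU' x hx) (adjoint_mem' x hx))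

end InnerProductSpace

section FermionicSign

variable {V : Type*} [LinearOrder V] {K : Finset V} {v w : V}

lemma fsign_erase_of_le (h : w ≤ v) : fsign (K.erase v) w = fsign K w := by
  rw [fsign, fsign, Finset.filter_erase, Finset.erase_eq_of_notMem (by simp [h])]

lemma fsign_erase_of_lt (hv : v ∈ K) (h : v < w) : fsign (K.erase v) w = -fsign K w := by
  rw [fsign, fsign, Finset.filter_erase,
    ← Finset.card_erase_add_one (Finset.mem_filter.2 ⟨hv, h⟩), pow_succ, mul_neg_one, neg_neg]

lemma fsign_mul_fsign_erase_add_swap (hv : v ∈ K) (hw : w ∈ K) (hne : v ≠ w) :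
    fsign K v * fsign (K.erase v) w + fsign K w * fsign (K.erase w) v = 0 := by
  rcases hne.lt_or_gt with h | h
  · rw [fsign_erase_of_lt hv h, fsign_erase_of_le h.le]; ring
  · rw [fsign_erase_of_lt hw h, fsign_erase_of_le h.le]; ring

end FermionicSign

section HardCoreModel

variable {V : Type*} [LinearOrder V] {G : SimpleGraph V}

/-- The independent set `J ∖ {v}`, equal to `J` when `v ∉ J`; it labels the basis states from which
the supercharge reaches `|J⟩`. -/
def IndepSet.erase (J : IndepSet G) (v : V) : IndepSet G :=
  ⟨J.1.erase v, J.2.mono (Finset.erase_subset v J.1)⟩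

lemma IndepSet.coe_erase (J : IndepSet G) (v : V) : (J.erase v).1 = J.1.erase v := rfl

lemma IndepSet.odd_card_erase_iff {J : IndepSet G} {v : V} (hv : v ∈ J.1) :
    Odd (J.erase v).1.card ↔ Even J.1.card := by
  rw [J.coe_erase, ← Finset.card_erase_add_one hv, Nat.even_add_one, Nat.not_even_iff_odd]

lemma IndepSet.even_card_erase_iff {J : IndepSet G} {v : V} (hv : v ∈ J.1) :
    Even (J.erase v).1.card ↔ Odd J.1.card := by
  rw [← Nat.not_odd_iff_even, odd_card_erase_iff hv, Nat.not_even_iff_odd]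

lemma IndepSet.erase_right_comm (J : IndepSet G) (v w : V) :
    (J.erase v).erase w = (J.erase w).erase v :=
  Subtype.ext Finset.erase_right_comm

variable [Fintype V]

lemma supercharge_apply (ψ : FockSpace G) (J : IndepSet G) :
    supercharge G ψ J = ∑ v ∈ J.1, fsign J.1 v * ψ (J.erase v) :=
  Finset.sum_congr rfl fun v _ =>
    congrArg (· * ψ (J.erase v)) (fsign_erase_of_le (le_refl v))

lemma supercharge_comp_supercharge (G : SimpleGraph V) : supercharge G ∘ₗ supercharge G = 0 := by
  ext ψ J
  let term (v w : V) : ℂ := fsign J.1 v * fsign (J.1.erase v) w * ψ ((J.erase v).erase w)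
  have term_add_swap : ∀ v ∈ J.1, ∀ w ∈ J.1, v ≠ w → term v w + term w v = 0 := by
    intro v hv w hw hne
    simp only [term]
    rw [J.erase_right_comm w v, ← add_mul, fsign_mul_fsign_erase_add_swap hv hw hne, zero_mul]
  calc supercharge G (supercharge G ψ) J
      = ∑ v ∈ J.1, ∑ w ∈ J.1.erase v, term v w := by
        simp only [supercharge_apply, IndepSet.coe_erase, Finset.mul_sum, mul_assoc, term]
    _ = 0 := sum_sum_erase_eq_zero_of_add_swap_eq_zero _ _ term_add_swap

lemma bosonic_eq_span_image : bosonic G =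
    Submodule.span ℂ (EuclideanSpace.basisFun (IndepSet G) ℂ '' {I | Even I.1.card}) := by
  simp only [bosonic, Set.image, EuclideanSpace.basisFun_apply, Set.mem_ofPred_eq, eq_comm]

lemma fermionic_eq_span_image : fermionic G =
    Submodule.span ℂ (EuclideanSpace.basisFun (IndepSet G) ℂ '' {I | Odd I.1.card}) := by
  simp only [fermionic, Set.image, EuclideanSpace.basisFun_apply, Set.mem_ofPred_eq, eq_comm]

lemma orthogonal_bosonic : (bosonic G)ᗮ = fermionic G := by
  rw [bosonic_eq_span_image, fermionic_eq_span_image, orthogonal_span_orthonormalBasis_image]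
  simp only [Set.compl_ofPred, Nat.not_even_iff_odd]

lemma mem_bosonic_iff {ψ : FockSpace G} : ψ ∈ bosonic G ↔ ∀ I, Odd I.1.card → ψ I = 0 := by
  rw [bosonic_eq_span_image, mem_span_orthonormalBasis_image_iff]
  simp only [Set.mem_ofPred_eq, Nat.not_even_iff_odd, EuclideanSpace.basisFun_repr]

lemma mem_fermionic_iff {ψ : FockSpace G} : ψ ∈ fermionic G ↔ ∀ I, Even I.1.card → ψ I = 0 := by
  rw [fermionic_eq_span_image, mem_span_orthonormalBasis_image_iff]
  simp only [Set.mem_ofPred_eq, Nat.not_odd_iff_even, EuclideanSpace.basisFun_repr]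

lemma supercharge_mem_fermionic {ψ : FockSpace G} (hψ : ψ ∈ bosonic G) :
    supercharge G ψ ∈ fermionic G := by
  refine mem_fermionic_iff.2 fun J hJ => ?_
  rw [supercharge_apply]
  exact Finset.sum_eq_zero fun v hv => mul_eq_zero_of_right _ <|
    mem_bosonic_iff.1 hψ _ ((IndepSet.odd_card_erase_iff hv).2 hJ)

lemma supercharge_mem_bosonic {ψ : FockSpace G} (hψ : ψ ∈ fermionic G) :
    supercharge G ψ ∈ bosonic G := by
  refine mem_bosonic_iff.2 fun J hJ => ?_
  rw [supercharge_apply]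
  exact Finset.sum_eq_zero fun v hv => mul_eq_zero_of_right _ <|
    mem_fermionic_iff.1 hψ _ ((IndepSet.even_card_erase_iff hv).2 hJ)

lemma finrank_bosonic_sub_finrank_fermionic :
    (Module.finrank ℂ (bosonic G) : ℤ) - Module.finrank ℂ (fermionic G)
      = ∑ I : IndepSet G, (-1 : ℤ) ^ I.1.card := by
  have basis_linearIndependent :=
    (EuclideanSpace.basisFun (IndepSet G) ℂ).orthonormal.linearIndependent
  rw [bosonic_eq_span_image, fermionic_eq_span_image,
    finrank_span_image_eq_card basis_linearIndependent,
    finrank_span_image_eq_card basis_linearIndependent,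
    sum_neg_one_pow_eq_card_even_sub_card_odd]

end HardCoreModel

/-- The Witten index of the supersymmetric hard-core fermion model equals
the independence polynomial of the graph evaluated at `−1`:
`dim(ker H ∩ bosonic) − dim(ker H ∩ fermionic) = Σ_I (−1)^{|I|}`, the sum running over all
independent sets `I` of `G` (including the empty set). -/
theorem witten_index_eq_independence_polynomial
    {V : Type*} [Fintype V] [LinearOrder V] (G : SimpleGraph V) :
    (Module.finrank ℂ ↥(LinearMap.ker (hamiltonian G) ⊓ bosonic G) : ℤ)
      - Module.finrank ℂ ↥(LinearMap.ker (hamiltonian G) ⊓ fermionic G)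
      = ∑ I : IndepSet G, (-1 : ℤ) ^ I.1.card := by
  have index_eq := finrank_ker_inf_sub_finrank_ker_inf_orthogonal
    (supercharge_comp_supercharge G) (U := bosonic G)
  rw [orthogonal_bosonic] at index_eq
  rw [hamiltonian, ← finrank_bosonic_sub_finrank_fermionic]
  exact index_eq (fun _ => supercharge_mem_fermionic) (fun _ => supercharge_mem_bosonic)
end
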